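/- Let H be a separable real Hilbert space with Hilbert bases (eₖ)_{k∈ℕ} and (fₙ)_{n∈ℕ}, let (αₖ)_{k∈ℕ} be nonnegative real numbers, let (γₙ)_{n∈ℕ} be nonnegative real numbers with Σₙ γₙ < ∞, and let T > 0. Then Σₙ γₙ ∫₀ᵀ ( Σₖ αₖ e^{−2 αₖ s} ⟨fₙ, eₖ⟩_H² ) ds ≤ (1/2) Σₙ γₙ. (For the operator A with eigenpairs (αₖ, eₖ), its semigroup S, and the trace-class operator Q with eigenpairs (γₙ, fₙ), this is the Hilbert–Schmidt norm bound ∫₀ᵀ ‖A^{1/2} S(s)‖²_{L_HS(𝓗;H)} ds ≤ (1/2)·Tr(Q) used to bound the second moment of the mild solution of dX + AX dt = dW.) -/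

import Mathlib

open MeasureTheory
open scoped InnerProductSpace

/-!
For each `n` the inner sum is integrated term by term. Since `s ↦ -e^{-2 αₖ s} / 2` is an
antiderivative of `s ↦ αₖ e^{-2 αₖ s}`, the `k`-th term contributes
`(1 - e^{-2 αₖ T}) / 2 * ⟪fₙ, eₖ⟫² ≤ ⟪fₙ, eₖ⟫² / 2`, uniformly in `αₖ ≥ 0`. Parseval's identity
for `e` and `‖fₙ‖ = 1` bound the `n`-th integral by `1 / 2` (`integral_tsum_le_half`), and the
claim follows by summing against the weights `γₙ`.
-/

/-- The antiderivative `-e^{-2as} / 2` needs no division by `a`, so `a = 0` is included. -/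
lemma integral_mul_exp_neg (a T : ℝ) (hT : 0 ≤ T) :
    ∫ s in Set.Ioc (0 : ℝ) T, a * Real.exp (-2 * a * s) = (1 - Real.exp (-2 * a * T)) / 2 := by
  rw [← intervalIntegral.integral_of_le hT]
  have hderiv : ∀ s ∈ Set.uIcc (0 : ℝ) T,
      HasDerivAt (fun s => -Real.exp (-2 * a * s) / 2) (a * Real.exp (-2 * a * s)) s := by
    intro s _
    refine ((((hasDerivAt_id' s).const_mul (-2 * a)).exp.neg).div_const 2).congr_deriv ?_
    ring
  rw [intervalIntegral.integral_eq_sub_of_hasDerivAt hderiv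
    (Continuous.intervalIntegrable (by fun_prop) _ _)]
  simp only [mul_zero, Real.exp_zero]
  ring

lemma hasSum_inner_sq {H : Type*} [NormedAddCommGroup H] [InnerProductSpace ℝ H]
    [CompleteSpace H] (e : HilbertBasis ℕ ℝ H) (x : H) :
    HasSum (fun k => ⟪x, e k⟫_ℝ ^ 2) (‖x‖ ^ 2) := by
  have h := e.hasSum_inner_mul_inner x x
  rw [real_inner_self_eq_norm_sq] at h
  refine h.congr_fun ?_
  intro k
  rw [real_inner_comm x (e k), sq]

/-- The estimate for a single vector, i.e. `∫₀ᵀ ‖A^{1/2} S(s) x‖² ds ≤ ‖x‖² / 2`. -/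
lemma integral_tsum_le_half {H : Type*} [NormedAddCommGroup H] [InnerProductSpace ℝ H]
    [CompleteSpace H] (e : HilbertBasis ℕ ℝ H) (x : H)
    (α : ℕ → ℝ) (hα : ∀ k, 0 ≤ α k) (T : ℝ) (hT : 0 ≤ T) :
    ∫ s in Set.Ioc (0 : ℝ) T, (∑' k, α k * Real.exp (-2 * α k * s) * ⟪x, e k⟫_ℝ ^ 2)
      ≤ ‖x‖ ^ 2 / 2 := by
  have hsum := (hasSum_inner_sq e x).div_const 2
  have hint : ∀ k, ∫ s in Set.Ioc (0 : ℝ) T, α k * Real.exp (-2 * α k * s) * ⟪x, e k⟫_ℝ ^ 2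
      = (1 - Real.exp (-2 * α k * T)) / 2 * ⟪x, e k⟫_ℝ ^ 2 := fun k => by
    rw [integral_mul_const, integral_mul_exp_neg _ _ hT]
  have hnonneg : ∀ k s, 0 ≤ α k * Real.exp (-2 * α k * s) * ⟪x, e k⟫_ℝ ^ 2 := fun k s =>
    mul_nonneg (mul_nonneg (hα k) (Real.exp_pos _).le) (sq_nonneg _)
  have hle : ∀ k, ∫ s in Set.Ioc (0 : ℝ) T, α k * Real.exp (-2 * α k * s) * ⟪x, e k⟫_ℝ ^ 2
      ≤ ⟪x, e k⟫_ℝ ^ 2 / 2 := fun k => by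
    rw [hint]
    nlinarith [mul_nonneg (Real.exp_pos (-2 * α k * T)).le (sq_nonneg ⟪x, e k⟫_ℝ)]
  have hsummable : Summable fun k =>
      ∫ s in Set.Ioc (0 : ℝ) T, α k * Real.exp (-2 * α k * s) * ⟪x, e k⟫_ℝ ^ 2 :=
    .of_nonneg_of_le (fun k => integral_nonneg (hnonneg k)) hle hsum.summable
  rw [← integral_tsum_of_summable_integral_norm
    (F := fun k s => α k * Real.exp (-2 * α k * s) * ⟪x, e k⟫_ℝ ^ 2)
    (fun k => Continuous.integrableOn_Ioc (by fun_prop))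
    (by simpa only [Real.norm_of_nonneg (hnonneg _ _)] using hsummable), ← hsum.tsum_eq]
  exact hsummable.tsum_le_tsum hle hsum.summable

/-- The Hilbert–Schmidt norm bound `∫₀ᵀ ‖A^{1/2} S(s)‖²_{HS} ds ≤ Tr(Q)/2`
expressed spectrally: with eigenpairs `(αₖ, eₖ)` of `A` and `(γₙ, fₙ)` of `Q`,
`Σₙ γₙ ∫₀ᵀ Σₖ αₖ e^{−2 αₖ s} ⟪fₙ, eₖ⟫² ds ≤ (1/2) Σₙ γₙ`. -/
theorem hilbert_schmidt_smoothing_estimate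
    {H : Type*} [NormedAddCommGroup H] [InnerProductSpace ℝ H] [CompleteSpace H]
    (e f : HilbertBasis ℕ ℝ H)
    (α : ℕ → ℝ) (hα : ∀ k, 0 ≤ α k)
    (γ : ℕ → ℝ) (hγ : ∀ n, 0 ≤ γ n) (hγs : Summable γ)
    (T : ℝ) (hT : 0 < T) :
    ∑' n, γ n * ∫ s in Set.Ioc (0 : ℝ) T,
        (∑' k, α k * Real.exp (-2 * α k * s) * ⟪f n, e k⟫_ℝ ^ 2)
      ≤ (1 / 2) * ∑' n, γ n := by
  have hle : ∀ n, γ n * ∫ s in Set.Ioc (0 : ℝ) T,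
      (∑' k, α k * Real.exp (-2 * α k * s) * ⟪f n, e k⟫_ℝ ^ 2) ≤ 1 / 2 * γ n := fun n => by
    have h := integral_tsum_le_half e (f n) α hα T hT.le
    rw [f.orthonormal.1 n, one_pow] at h
    rw [mul_comm (1 / 2)]
    exact mul_le_mul_of_nonneg_left h (hγ n)
  have hnonneg : ∀ n, 0 ≤ γ n * ∫ s in Set.Ioc (0 : ℝ) T,
      (∑' k, α k * Real.exp (-2 * α k * s) * ⟪f n, e k⟫_ℝ ^ 2) := fun n =>
    mul_nonneg (hγ n) (integral_nonneg fun s => tsum_nonneg fun k =>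
      mul_nonneg (mul_nonneg (hα k) (Real.exp_pos _).le) (sq_nonneg _))
  rw [← tsum_mul_left]
  exact (Summable.of_nonneg_of_le hnonneg hle (hγs.mul_left _)).tsum_le_tsum hle
    (hγs.mul_left _)
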